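/- arXiv:2011.06173 — 5 statements merged into one kernel-verified Lean document; each statement's English description precedes it below -/
import Mathlib

section
/- Let G be a finite simple graph that is 2P4-free, C5-free and C7-free, and let v1,…,v9 (indices modulo 9) be distinct vertices inducing a 9-cycle in G (v_i adjacent to v_j iff j ≡ i±1 mod 9). Let x be a vertex outside the cycle that is adjacent to at least one cycle vertex, and suppose x has a neighbor y such that y is not on the cycle and y has no neighbor on the cycle. Then there exists an index i such that x is adjacent to both v_i and v_{i+1}. -/
/-- `a b c d` form an induced path on four vertices in `G`: the vertices are
distinct, consecutive vertices are adjacent, and non-consecutive vertices are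
non-adjacent. -/
def IsInducedP4 {V : Type*} (G : SimpleGraph V) (a b c d : V) : Prop :=
  a ≠ b ∧ a ≠ c ∧ a ≠ d ∧ b ≠ c ∧ b ≠ d ∧ c ≠ d ∧
  G.Adj a b ∧ G.Adj b c ∧ G.Adj c d ∧ ¬ G.Adj a c ∧ ¬ G.Adj a d ∧ ¬ G.Adj b d

/-- `G` is `2P₄`-free: there are no eight distinct vertices forming two
induced copies of `P₄` with no edges between the two copies. -/
def TwoP4Free {V : Type*} (G : SimpleGraph V) : Prop :=
  ¬ ∃ a₁ a₂ a₃ a₄ b₁ b₂ b₃ b₄ : V,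
      IsInducedP4 G a₁ a₂ a₃ a₄ ∧ IsInducedP4 G b₁ b₂ b₃ b₄ ∧
      ∀ u ∈ ({a₁, a₂, a₃, a₄} : Set V), ∀ w ∈ ({b₁, b₂, b₃, b₄} : Set V),
        u ≠ w ∧ ¬ G.Adj u w

/-- The vertices `v 0, …, v (n-1)` (indexed by `ZMod n`) form an induced
cycle `C_n` in `G`. -/
def IsInducedCycle {V : Type*} (G : SimpleGraph V) (n : ℕ) (v : ZMod n → V) : Prop :=
  Function.Injective v ∧ ∀ i j : ZMod n, G.Adj (v i) (v j) ↔ (j = i + 1 ∨ i = j + 1)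

/-- `G` is `C_n`-free: it contains no induced cycle on `n` vertices. -/
def CycleFree {V : Type*} (G : SimpleGraph V) (n : ℕ) : Prop :=
  ¬ ∃ v : ZMod n → V, IsInducedCycle G n v

/-!
Suppose `x` has no two consecutive neighbours on the cycle and walk along the cycle from one
neighbour of `x` to the next. A gap of length 3 or 5 would close up through `x` to an induced `C₅`
or `C₇`. A gap of length at least 6 would leave four consecutive cycle vertices that are
anticomplete to the induced path formed by `y`, `x`, the neighbour `v a` at the start of the gap
and `v (a - 1)`. So every gap has length 2 or 4. Hence a walk from a neighbour `v a` in steps of 2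
never misses the neighbourhood of `x` twice in a row, and one of `v (a + 8)` and
`v (a + 10) = v (a + 1)` is a neighbour of `x` consecutive to `v a`.
-/

section

variable {V : Type*} {G : SimpleGraph V}

theorem isInducedP4_of_adj {a b c d : V} (hab : G.Adj a b) (hbc : G.Adj b c) (hcd : G.Adj c d)
    (hac : ¬ G.Adj a c) (had : ¬ G.Adj a d) (hbd : ¬ G.Adj b d) : IsInducedP4 G a b c d := by
  refine ⟨hab.ne, ?_, ?_, hbc.ne, ?_, hcd.ne, hab, hbc, hcd, hac, had, hbd⟩
  · rintro rfl; exact had hcd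
  · rintro rfl; exact hac hcd.symm
  · rintro rfl; exact had hab

theorem IsInducedP4.exists_adj_of_mem {a b c d u : V} (h : IsInducedP4 G a b c d)
    (hu : u ∈ ({a, b, c, d} : Set V)) : ∃ w ∈ ({a, b, c, d} : Set V), G.Adj w u := by
  obtain ⟨-, -, -, -, -, -, hab, hbc, hcd, -⟩ := h
  rcases hu with rfl | rfl | rfl | rfl
  · exact ⟨b, by simp, hab.symm⟩
  · exact ⟨a, by simp, hab⟩
  · exact ⟨b, by simp, hbc⟩
  · exact ⟨c, by simp, hcd⟩

theorem TwoP4Free.exists_adj (hG : TwoP4Free G) {a₁ a₂ a₃ a₄ b₁ b₂ b₃ b₄ : V}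
    (ha : IsInducedP4 G a₁ a₂ a₃ a₄) (hb : IsInducedP4 G b₁ b₂ b₃ b₄) :
    ∃ u ∈ ({a₁, a₂, a₃, a₄} : Set V), ∃ w ∈ ({b₁, b₂, b₃, b₄} : Set V), G.Adj u w := by
  by_contra! hne
  refine hG ⟨a₁, a₂, a₃, a₄, b₁, b₂, b₃, b₄, ha, hb, fun u hu w hw => ⟨?_, hne u hu w hw⟩⟩
  rintro rfl
  -- A common vertex has a neighbour on the first path, which is then joined to the second path.
  obtain ⟨u', hu', hadj⟩ := ha.exists_adj_of_mem hu
  exact hne u' hu' u hw hadj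

theorem fin_eq_add_one_iff_val {m : ℕ} {i j : Fin (m + 2)} :
    j = i + 1 ↔ (j : ℕ) = i + 1 ∨ ((i : ℕ) = m + 1 ∧ (j : ℕ) = 0) := by
  rw [Fin.ext_iff, Fin.val_add_one]
  split_ifs with hi <;> rw [Fin.ext_iff, Fin.val_last] at hi <;> omega

namespace IsInducedCycle

variable {n : ℕ} {v : ZMod n → V} {x y : V}

theorem add_natCast_inj (hv : IsInducedCycle G n v) (a : ZMod n) {i j : ℕ} (hi : i < n)
    (hj : j < n) : v (a + i) = v (a + j) ↔ i = j := by
  rw [hv.1.eq_iff, add_right_inj, ZMod.natCast_eq_natCast_iff', Nat.mod_eq_of_lt hi,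
    Nat.mod_eq_of_lt hj]

theorem adj_add_natCast (hv : IsInducedCycle G n v) (a : ZMod n) {i j : ℕ} (hi : i + 1 < n)
    (hj : j + 1 < n) : G.Adj (v (a + i)) (v (a + j)) ↔ j = i + 1 ∨ i = j + 1 := by
  rw [hv.2, add_assoc, add_assoc, ← Nat.cast_add_one, ← Nat.cast_add_one, ← hv.1.eq_iff,
    ← hv.1.eq_iff, hv.add_natCast_inj a (by omega) hi, hv.add_natCast_inj a (by omega) hj]

theorem isInducedP4_arc (hv : IsInducedCycle G n v) (a : ZMod n) {k : ℕ} (hk : k + 4 < n) :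
    IsInducedP4 G (v (a + k)) (v (a + (k + 1 : ℕ))) (v (a + (k + 2 : ℕ)))
      (v (a + (k + 3 : ℕ))) := by
  apply isInducedP4_of_adj <;> rw [hv.adj_add_natCast a (by omega) (by omega)] <;> omega

-- `ZMod (m + 2)` unfolds to `Fin (m + 2)`, so a `Fin.cons` can serve as the map of a cycle.
theorem isInducedCycle_cons_arc (hv : IsInducedCycle G n v) (hx : x ∉ Set.range v)
    {a : ZMod n} {m : ℕ} (hm : m + 1 < n) (h₀ : G.Adj x (v a)) (hm' : G.Adj x (v (a + m)))
    (hlt : ∀ j : ℕ, 0 < j → j < m → ¬ G.Adj x (v (a + j))) :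
    IsInducedCycle G (m + 2)
      (Fin.cons x fun j : Fin (m + 1) => v (a + (j : ℕ)) : Fin (m + 2) → V) := by
  have hxadj (j : Fin (m + 1)) : G.Adj x (v (a + (j : ℕ))) ↔ (j : ℕ) = 0 ∨ (j : ℕ) = m := by
    refine ⟨fun h => ?_, ?_⟩
    · by_contra! hj
      exact hlt j (by omega) (by omega) h
    · rintro (h | h) <;> simpa [h]
  refine ⟨Fin.cons_injective_iff.2 ⟨?_, fun i j hij => ?_⟩, fun i j => ?_⟩
  · rintro ⟨j, hj⟩
    exact hx ⟨_, hj⟩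
  · exact Fin.ext ((hv.add_natCast_inj a (by omega) (by omega)).1 hij)
  · refine Iff.trans ?_ (or_congr fin_eq_add_one_iff_val fin_eq_add_one_iff_val).symm
    induction i using Fin.cases with
    | zero =>
      induction j using Fin.cases with
      | zero => simp
      | succ j =>
        simp only [Fin.cons_zero, Fin.cons_succ, hxadj, Fin.val_succ, Fin.coe_ofNat_eq_mod,
          Nat.zero_mod, and_true]
        omega
    | succ i =>
      induction j using Fin.cases with
      | zero =>
        simp only [Fin.cons_zero, Fin.cons_succ, G.adj_comm _ x, hxadj, Fin.val_succ,
          Fin.coe_ofNat_eq_mod, Nat.zero_mod, and_true]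
        omega
      | succ j =>
        simp only [Fin.cons_succ, Fin.val_succ]
        rw [hv.adj_add_natCast a (by omega) (by omega)]
        omega

theorem not_adj_of_cycleFree (hv : IsInducedCycle G n v) (hx : x ∉ Set.range v)
    {a : ZMod n} {m : ℕ} (hm : m + 1 < n) (hG : CycleFree G (m + 2)) (h₀ : G.Adj x (v a))
    (hlt : ∀ j : ℕ, 0 < j → j < m → ¬ G.Adj x (v (a + j))) : ¬ G.Adj x (v (a + m)) :=
  fun hm' => hG ⟨_, hv.isInducedCycle_cons_arc hx hm h₀ hm' hlt⟩

theorem exists_adj_of_twoP4Free (hv : IsInducedCycle G n v) (hn : 8 ≤ n) (hG : TwoP4Free G)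
    (hxy : G.Adj x y) (hy : ∀ i, ¬ G.Adj y (v i)) {a : ZMod n} (ha : G.Adj x (v a))
    (hpred : ¬ G.Adj x (v (a - 1))) : ∃ j : ℕ, 2 ≤ j ∧ j ≤ 5 ∧ G.Adj x (v (a + j)) := by
  have hpath : IsInducedP4 G y x (v a) (v (a - 1)) :=
    isInducedP4_of_adj hxy.symm ha ((hv.2 _ _).2 (by simp)) (hy _) (hy _) hpred
  have harc := hv.isInducedP4_arc a (k := 2) (by omega)
  obtain ⟨u, hu, w, hw, huw⟩ := hG.exists_adj hpath harc
  obtain ⟨j, hj2, hj5, rfl⟩ : ∃ j : ℕ, 2 ≤ j ∧ j ≤ 5 ∧ w = v (a + j) := by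
    rcases hw with rfl | rfl | rfl | rfl
    exacts [⟨2, by simp⟩, ⟨3, by simp⟩, ⟨4, by simp⟩, ⟨5, by simp⟩]
  have hstart : ¬ G.Adj (v a) (v (a + j)) := by
    have := hv.adj_add_natCast a (i := 0) (j := j) (by omega) (by omega)
    rw [Nat.cast_zero, add_zero] at this
    rw [this]
    omega
  have hbefore : ¬ G.Adj (v (a - 1)) (v (a + j)) := by
    have := hv.adj_add_natCast (a - 1) (i := 0) (j := j + 1) (by omega) (by omega)
    rw [Nat.cast_zero, add_zero, Nat.cast_add_one, sub_add_add_cancel] at this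
    rw [this]
    omega
  rcases hu with rfl | rfl | rfl | rfl
  · exact absurd huw (hy _)
  · exact ⟨j, hj2, hj5, huw⟩
  · exact absurd huw hstart
  · exact absurd huw hbefore

theorem adj_add_two_or_adj_add_four (hv : IsInducedCycle G n v) (hn : 8 ≤ n)
    (h2P4 : TwoP4Free G) (hC5 : CycleFree G 5) (hC7 : CycleFree G 7) (hxy : G.Adj x y)
    (hy : ∀ i, ¬ G.Adj y (v i)) (hcons : ∀ i, G.Adj x (v i) → ¬ G.Adj x (v (i + 1)))
    {a : ZMod n} (ha : G.Adj x (v a)) :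
    G.Adj x (v (a + 2)) ∨ G.Adj x (v (a + 4)) := by
  by_contra! ⟨h2, h4⟩
  have hx : x ∉ Set.range v := by
    rintro ⟨i, rfl⟩
    exact hy i hxy.symm
  have h1 : ¬ G.Adj x (v (a + 1)) := hcons a ha
  have h3 : ¬ G.Adj x (v (a + 3)) :=
    hv.not_adj_of_cycleFree hx (m := 3) (by omega) hC5 ha fun j _ _ => by
      interval_cases j <;> simpa
  have h5 : ¬ G.Adj x (v (a + 5)) :=
    hv.not_adj_of_cycleFree hx (m := 5) (by omega) hC7 ha fun j _ _ => by
      interval_cases j <;> simpa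
  have hpred : ¬ G.Adj x (v (a - 1)) := fun h => hcons _ h (by simpa using ha)
  obtain ⟨j, hj2, hj5, hj⟩ := hv.exists_adj_of_twoP4Free hn h2P4 hxy hy ha hpred
  interval_cases j <;> rw [Nat.cast_ofNat] at hj <;> contradiction

end IsInducedCycle

theorem add_nsmul_or_add_succ_nsmul {M : Type*} [AddMonoid M] {p : M → Prop} {d : M}
    (hstep : ∀ a, p a → p (a + d) ∨ p (a + 2 • d)) {a : M} (ha : p a) (k : ℕ) :
    p (a + k • d) ∨ p (a + (k + 1) • d) := by
  induction k with
  | zero => simp [ha]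
  | succ k ih =>
    rcases ih with h | h
    · simpa only [add_assoc, ← succ_nsmul, ← add_nsmul] using hstep _ h
    · exact .inl h

theorem stmt0_general (h2P4 : TwoP4Free G) (hC5 : CycleFree G 5) (hC7 : CycleFree G 7)
    {v : ZMod 9 → V} (hv : IsInducedCycle G 9 v) {x y : V}
    (hx : ∃ i, G.Adj x (v i)) (hxy : G.Adj x y) (hy : ∀ i, ¬ G.Adj y (v i)) :
    ∃ i : ZMod 9, G.Adj x (v i) ∧ G.Adj x (v (i + 1)) := by
  by_contra! hcons
  obtain ⟨a, ha⟩ := hx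
  have hgap : ∀ i, G.Adj x (v i) → G.Adj x (v (i + 2)) ∨ G.Adj x (v (i + 2 • 2)) := fun i hi => by
    simpa only [show (2 • 2 : ZMod 9) = 4 from rfl] using
      hv.adj_add_two_or_adj_add_four (by norm_num) h2P4 hC5 hC7 hxy hy hcons hi
  rcases add_nsmul_or_add_succ_nsmul hgap ha 4 with h8 | h10
  · have hround : a + 4 • 2 + 1 = a := by
      rw [add_assoc, show (4 • 2 + 1 : ZMod 9) = 0 from rfl, add_zero]
    exact hcons _ h8 (by rwa [hround])
  · have hround : a + (4 + 1) • 2 = a + 1 := by rw [show ((4 + 1) • 2 : ZMod 9) = 1 from rfl]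
    exact hcons a ha (by rwa [hround] at h10)

end

theorem stmt0 {V : Type*} [Fintype V] (G : SimpleGraph V)
    (h2P4 : TwoP4Free G) (hC5 : CycleFree G 5) (hC7 : CycleFree G 7)
    (v : ZMod 9 → V) (hv : IsInducedCycle G 9 v)
    (x : V) (hx : x ∉ Set.range v) (hx1 : ∃ i, G.Adj x (v i))
    (y : V) (hxy : G.Adj x y) (hyN : y ∉ Set.range v)
    (hy0 : ∀ i, ¬ G.Adj y (v i)) :
    ∃ i : ZMod 9, G.Adj x (v i) ∧ G.Adj x (v (i + 1)) :=
  stmt0_general h2P4 hC5 hC7 hv hx1 hxy hy0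
end

section
/- Let G be a finite simple graph that is C5-free, let v1,…,v7 induce a C7 in G with vertex set N0, and let x be a vertex outside N0 with at least one neighbor in N0. Suppose there is no index i such that x is adjacent to both v_i and v_{i+1}. Then there exists an index i such that N0(x) = {v_i} or N0(x) = {v_i, v_{i+2}}. -/
/-!
An arc `v i, …, v (i + k)` of an induced cycle is an induced path, so a vertex whose neighbors on
the arc are exactly its two ends closes it to an induced `C_{k+2}`. For `k = 3` this shows that in a
`C5`-free graph no two neighbors of `x` on the `C7` are at distance three, distance one being
excluded by assumption. Hence any two are at distance two, and `C7` has no three such vertices.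
-/

section InducedCycle

variable {V : Type*} {G : SimpleGraph V}

-- Injectivity holds because distinct vertices of `C_n` have distinct neighborhoods when `n ≠ 4`.
theorem isInducedCycle_of_adj_iff {n : ℕ} (hn : n ≠ 4) {v : ZMod n → V}
    (hadj : ∀ i j, G.Adj (v i) (v j) ↔ (j = i + 1 ∨ i = j + 1)) :
    IsInducedCycle G n v := by
  refine ⟨fun p q hpq ↦ ?_, hadj⟩
  have hnbr : ∀ r, (r = p + 1 ∨ p = r + 1) ↔ (r = q + 1 ∨ q = r + 1) := fun r ↦ by
    rw [← hadj, ← hadj, hpq]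
  by_contra hne
  have hsucc : q = p + 1 + 1 :=
    ((hnbr (p + 1)).1 (.inl rfl)).resolve_left fun h ↦ hne (add_right_cancel h)
  have hpred : p = q + 1 + 1 :=
    ((hnbr (q + 1)).2 (.inl rfl)).resolve_left fun h ↦ hne (add_right_cancel h).symm
  have hfour : ((4 : ℕ) : ZMod n) = 0 := by
    push_cast
    linear_combination -hsucc - hpred
  have hle : n ≤ 4 := Nat.le_of_dvd (by norm_num) ((ZMod.natCast_eq_zero_iff 4 n).1 hfour)
  interval_cases n
  · exact absurd hfour (by decide)
  · exact hne (Subsingleton.elim p q)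
  · exact hne ((by decide : ∀ p q : ZMod 2, q = p + 1 + 1 → p = q) p q hsucc)
  · exact absurd hfour (by decide)
  · exact hn rfl

theorem isInducedCycle_cons {k : ℕ} (hk : k ≠ 2) {x : V} {p : Fin (k + 1) → V}
    (hp : ∀ a b, G.Adj (p a) (p b) ↔ ((b : ℕ) = a + 1 ∨ (a : ℕ) = b + 1))
    (hx : ∀ a, G.Adj x (p a) ↔ (a = 0 ∨ a = Fin.last k)) :
    IsInducedCycle G (k + 2) (Fin.cons x p : Fin (k + 2) → V) := by
  have hends : ∀ a : Fin (k + 1),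
      (a = 0 ∨ a = Fin.last k) ↔ (a.succ = 0 + 1 ∨ (0 : Fin (k + 2)) = a.succ + 1) := fun a ↦ by
    simp only [Fin.ext_iff, Fin.val_add_one, Fin.val_succ, Fin.val_last, Fin.val_zero, zero_add,
      Fin.val_one]
    grind
  have hinner : ∀ a b : Fin (k + 1),
      ((b : ℕ) = a + 1 ∨ (a : ℕ) = b + 1) ↔ (b.succ = a.succ + 1 ∨ a.succ = b.succ + 1) := by
    intro a b
    simp only [Fin.ext_iff, Fin.val_add_one, Fin.val_succ, Fin.val_last]
    grind
  refine isInducedCycle_of_adj_iff (by omega) fun (i j : Fin (k + 2)) ↦ ?_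
  -- `ZMod (k + 2)` unfolds to `Fin (k + 2)`.
  change G.Adj _ _ ↔ j = i + 1 ∨ i = j + 1
  cases i using Fin.cases with
  | zero =>
    cases j using Fin.cases with
    | zero => simp
    | succ b => rw [Fin.cons_zero, Fin.cons_succ, hx, hends]
  | succ a =>
    cases j using Fin.cases with
    | zero => rw [Fin.cons_zero, Fin.cons_succ, G.adj_comm, hx, hends, or_comm]
    | succ b => rw [Fin.cons_succ, Fin.cons_succ, hp, hinner]

namespace IsInducedCycle

variable {n : ℕ} {v : ZMod n → V}

theorem adj_add_natCast_iff (hv : IsInducedCycle G n v) (i : ZMod n) {a b : ℕ}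
    (ha : a + 1 < n) (hb : b + 1 < n) :
    G.Adj (v (i + a)) (v (i + b)) ↔ (b = a + 1 ∨ a = b + 1) := by
  have natCast_eq_succ_iff : ∀ {c d : ℕ}, c + 1 < n → d + 1 < n →
      (i + (d : ZMod n) = i + c + 1 ↔ d = c + 1) := fun {c d} hc hd ↦ by
    rw [add_assoc, add_right_inj, ← Nat.cast_succ, ZMod.natCast_eq_natCast_iff',
      Nat.mod_eq_of_lt (by omega), Nat.mod_eq_of_lt hc]
  rw [hv.2, natCast_eq_succ_iff ha hb, natCast_eq_succ_iff hb ha]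

theorem not_adj_add_natCast_of_cycleFree (hv : IsInducedCycle G n v) {k : ℕ}
    (hfree : CycleFree G (k + 2)) (hk : k ≠ 2) (hkn : k + 1 < n) {x : V} {i : ZMod n}
    (hi : G.Adj x (v i)) (hmid : ∀ a : ℕ, 0 < a → a < k → ¬ G.Adj x (v (i + a))) :
    ¬ G.Adj x (v (i + k)) := by
  intro hend
  refine hfree ⟨_, isInducedCycle_cons (x := x) (p := fun a ↦ v (i + (a : ℕ))) hk
    (fun a b ↦ hv.adj_add_natCast_iff i (by omega) (by omega)) fun a ↦ ⟨fun ha ↦ ?_, ?_⟩⟩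
  · by_contra! hne
    exact hmid a (Fin.pos_iff_ne_zero.2 hne.1) (Fin.lt_last_iff_ne_last.2 hne.2) ha
  · rintro (rfl | rfl)
    · simpa using hi
    · exact hend

end IsInducedCycle

end InducedCycle

theorem zmod_seven_exists_eq_singleton_or_pair {S : Set (ZMod 7)} (hS : S.Nonempty)
    (hone : ∀ i ∈ S, i + 1 ∉ S) (hthree : ∀ i ∈ S, i + 3 ∉ S) :
    ∃ i, S = {i} ∨ S = {i, i + 2} := by
  have eq_or_add_two : ∀ i ∈ S, ∀ j ∈ S, j = i ∨ j = i + 2 ∨ i = j + 2 := by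
    intro i hi j hj
    have difference_cases : ∀ i j : ZMod 7, (j = i ∨ j = i + 2 ∨ i = j + 2) ∨
        j = i + 1 ∨ i = j + 1 ∨ j = i + 3 ∨ i = j + 3 := by decide
    rcases difference_cases i j with h | rfl | rfl | rfl | rfl
    · exact h
    · exact absurd hj (hone i hi)
    · exact absurd hi (hone j hj)
    · exact absurd hj (hthree i hi)
    · exact absurd hi (hthree j hj)
  by_cases hpair : ∃ i ∈ S, i + 2 ∈ S
  · obtain ⟨i, hi, hi2⟩ := hpair
    have no_third : ∀ i j : ZMod 7, (j = i ∨ j = i + 2 ∨ i = j + 2) →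
        (j = i + 2 ∨ j = i + 2 + 2 ∨ i + 2 = j + 2) → j = i ∨ j = i + 2 := by decide
    refine ⟨i, .inr (Set.Subset.antisymm (fun j hj ↦ ?_) (Set.pair_subset hi hi2))⟩
    exact no_third i j (eq_or_add_two i hi j hj) (eq_or_add_two (i + 2) hi2 j hj)
  · push Not at hpair
    obtain ⟨i, hi⟩ := hS
    refine ⟨i, .inl (Set.eq_singleton_iff_unique_mem.2 ⟨hi, fun j hj ↦ ?_⟩)⟩
    rcases eq_or_add_two i hi j hj with h | rfl | rfl
    · exact h
    · exact absurd hj (hpair i hi)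
    · exact absurd hi (hpair j hj)

theorem stmt1_general {V : Type*} (G : SimpleGraph V)
    (hC5 : CycleFree G 5)
    (v : ZMod 7 → V) (hv : IsInducedCycle G 7 v)
    (x : V) (hx1 : ∃ i, G.Adj x (v i))
    (hcons : ¬ ∃ i : ZMod 7, G.Adj x (v i) ∧ G.Adj x (v (i + 1))) :
    ∃ i : ZMod 7,
      {u | u ∈ Set.range v ∧ G.Adj x u} = {v i} ∨
      {u | u ∈ Set.range v ∧ G.Adj x u} = {v i, v (i + 2)} := by
  have hone : ∀ i, G.Adj x (v i) → ¬ G.Adj x (v (i + 1)) := fun i hi hi1 ↦ hcons ⟨i, hi, hi1⟩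
  have hthree : ∀ i, G.Adj x (v i) → ¬ G.Adj x (v (i + 3)) := by
    intro i hi hi3
    refine hv.not_adj_add_natCast_of_cycleFree (k := 3) hC5 (by decide) (by decide) hi
      (fun a ha0 ha3 ↦ ?_) hi3
    interval_cases a
    · simpa using hone i hi
    · exact fun hi2 ↦ hone (i + 2) hi2 (by rwa [add_assoc])
  have himage : {u | u ∈ Set.range v ∧ G.Adj x u} = v '' {i | G.Adj x (v i)} :=
    Set.image_preimage_eq_range_inter.symm
  obtain ⟨i, hi⟩ :=
    zmod_seven_exists_eq_singleton_or_pair (S := {i | G.Adj x (v i)}) hx1 hone hthree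
  refine ⟨i, hi.imp (fun h ↦ ?_) fun h ↦ ?_⟩
  · rw [himage, h, Set.image_singleton]
  · rw [himage, h, Set.image_pair]

theorem stmt1 {V : Type*} [Fintype V] (G : SimpleGraph V)
    (hC5 : CycleFree G 5)
    (v : ZMod 7 → V) (hv : IsInducedCycle G 7 v)
    (x : V) (hx : x ∉ Set.range v) (hx1 : ∃ i, G.Adj x (v i))
    (hcons : ¬ ∃ i : ZMod 7, G.Adj x (v i) ∧ G.Adj x (v (i + 1))) :
    ∃ i : ZMod 7,
      {u | u ∈ Set.range v ∧ G.Adj x u} = {v i} ∨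
      {u | u ∈ Set.range v ∧ G.Adj x u} = {v i, v (i + 2)} :=
  stmt1_general G hC5 v hv x hx1 hcons
end

section
/- Let G be a finite simple graph that is 2P4-free, and let v be a vertex of G such that the subgraph induced by the neighborhood N(v) is connected and bipartite with nonempty partite classes X and Y. Let G* be the neighborhood collapse of v: the graph whose vertex set is (V(G)∖(X∪Y)) together with two new vertices x and y, where two old vertices are adjacent in G* iff they are adjacent in G, x is adjacent to y, x is adjacent to an old vertex a iff some vertex of X is adjacent to a in G, and y is adjacent to an old vertex a iff some vertex of Y is adjacent to a in G. Then G* is 2P4-free. -/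
/-- Adjacency relation of the neighborhood collapse of `G` with respect to the
partite classes `X` and `Y`: the old vertices are those outside `X ∪ Y`, the
new vertex `Sum.inr false` plays the role of `x` (the collapse of `X`) and
`Sum.inr true` plays the role of `y` (the collapse of `Y`). -/
def collapseAdj {V : Type*} (G : SimpleGraph V) (X Y : Set V) :
    ({a : V // a ∉ X ∪ Y} ⊕ Bool) → ({a : V // a ∉ X ∪ Y} ⊕ Bool) → Prop
  | Sum.inl a, Sum.inl b => G.Adj a.1 b.1
  | Sum.inl a, Sum.inr b => if b then ∃ u ∈ Y, G.Adj u a.1 else ∃ u ∈ X, G.Adj u a.1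
  | Sum.inr b, Sum.inl a => if b then ∃ u ∈ Y, G.Adj u a.1 else ∃ u ∈ X, G.Adj u a.1
  | Sum.inr b, Sum.inr b' => b ≠ b'

/-- The neighborhood collapse of `G`: `X` and `Y` are replaced by the two
adjacent new vertices `Sum.inr false` and `Sum.inr true`. -/
def collapse {V : Type*} (G : SimpleGraph V) (X Y : Set V) :
    SimpleGraph ({a : V // a ∉ X ∪ Y} ⊕ Bool) where
  Adj := collapseAdj G X Y
  symm := by
    refine ⟨?_⟩
    rintro (a | b) (a' | b') h
    · exact G.adj_symm h
    · exact h
    · exact h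
    · exact Ne.symm h
  loopless := by
    refine ⟨?_⟩
    rintro (a | b) h
    · exact G.loopless.irrefl a.1 h
    · exact h rfl

/-!
Two induced four-vertex paths witness a `2P₄` as soon as there is no edge between them, because
every vertex of such a path has a neighbour on the path. So it suffices to lift an induced `P₄`
of the collapse to one of `G` inside the fibres of its vertices together with `v`: the vertex `v`
is harmless, having no neighbour among the old vertices, and one of the two paths consists of old
vertices only, since the two new vertices are adjacent.

Two new vertices on an induced path `abcd` are consecutive, so up to reversal either `c`, `d` are
old or exactly `b`, `c` are new. Suppose `c`, `d` are old. If `b` is new, choose a neighbour `u` of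
`c` in the fibre of `b`; then `vucd` is an induced path. If `b` is old, replace `a` by a neighbour
of `b` in its fibre. Suppose now that `b`, `c` are new. One class of the neighbourhood of `v` avoids
the neighbours of `a` and the other those of `d`, so `a` and `d`, which are not adjacent, have no
common neighbour there. As this neighbourhood is connected, a shortest path from `a` to `d` through
it exists and has at least four vertices; its first four vertices form an induced path.
-/

open SimpleGraph

section InducedP4

variable {V W : Type*} {G : SimpleGraph V} {a b c d : V}

theorem isInducedP4_iff : IsInducedP4 G a b c d ↔
    G.Adj a b ∧ G.Adj b c ∧ G.Adj c d ∧ ¬ G.Adj a c ∧ ¬ G.Adj a d ∧ ¬ G.Adj b d := by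
  refine ⟨fun ⟨_, _, _, _, _, _, h⟩ ↦ h, fun h ↦ ?_⟩
  obtain ⟨hab, hbc, hcd, hac, had, hbd⟩ := h
  refine ⟨hab.ne, ?_, ?_, hbc.ne, ?_, hcd.ne, hab, hbc, hcd, hac, had, hbd⟩
  · rintro rfl
    exact had hcd
  · rintro rfl
    exact hac hcd.symm
  · rintro rfl
    exact had hab

theorem IsInducedP4.symm (h : IsInducedP4 G a b c d) : IsInducedP4 G d c b a := by
  simp only [isInducedP4_iff, G.adj_comm] at h ⊢
  tauto

theorem isInducedP4_comap {f : W → V} {a b c d : W} :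
    IsInducedP4 (G.comap f) a b c d ↔ IsInducedP4 G (f a) (f b) (f c) (f d) := by
  simp only [isInducedP4_iff, comap_adj]

/-- The subgraph of `G` induced on `S` contains an induced path on four vertices. The path is
kept in `G` rather than in `G.induce S`, so that paths in different sets can be compared. -/
def HasInducedP4On (G : SimpleGraph V) (S : Set V) : Prop :=
  ∃ a ∈ S, ∃ b ∈ S, ∃ c ∈ S, ∃ d ∈ S, IsInducedP4 G a b c d

theorem HasInducedP4On.mono {S T : Set V} (h : HasInducedP4On G S) (hST : S ⊆ T) :
    HasInducedP4On G T := by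
  obtain ⟨a, ha, b, hb, c, hc, d, hd, habcd⟩ := h
  exact ⟨a, hST ha, b, hST hb, c, hST hc, d, hST hd, habcd⟩

theorem hasInducedP4On_comap {f : W → V} {S : Set W} :
    HasInducedP4On (G.comap f) S ↔ HasInducedP4On G (f '' S) := by
  simp only [HasInducedP4On, Set.exists_mem_image, isInducedP4_comap]

theorem TwoP4Free.exists_adj_s4 (hG : TwoP4Free G) {S T : Set V} (hS : HasInducedP4On G S)
    (hT : HasInducedP4On G T) : ∃ s ∈ S, ∃ t ∈ T, G.Adj s t := by
  obtain ⟨a₁, ha₁, a₂, ha₂, a₃, ha₃, a₄, ha₄, ha⟩ := hS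
  obtain ⟨b₁, hb₁, b₂, hb₂, b₃, hb₃, b₄, hb₄, hb⟩ := hT
  by_contra! hST
  refine hG ⟨a₁, a₂, a₃, a₄, b₁, b₂, b₃, b₄, ha, hb, fun u hu w hw ↦ ?_⟩
  have huS : u ∈ S := by
    rcases hu with rfl | rfl | rfl | rfl <;> assumption
  have hwT : w ∈ T := by
    rcases hw with rfl | rfl | rfl | rfl <;> assumption
  obtain ⟨x, hxT, hwx⟩ : ∃ x ∈ T, G.Adj w x := by
    obtain ⟨hb₁₂, hb₂₃, hb₃₄, -⟩ := isInducedP4_iff.1 hb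
    rcases hw with rfl | rfl | rfl | rfl
    exacts [⟨b₂, hb₂, hb₁₂⟩, ⟨b₃, hb₃, hb₂₃⟩, ⟨b₄, hb₄, hb₃₄⟩, ⟨b₃, hb₃, hb₃₄.symm⟩]
  refine ⟨?_, hST u huS w hwT⟩
  rintro rfl
  exact hST u huS x hxT hwx

theorem twoP4Free_of_forall_exists_adj
    (h : ∀ S T : Set V, Disjoint S T → HasInducedP4On G S → HasInducedP4On G T →
      ∃ s ∈ S, ∃ t ∈ T, G.Adj s t) : TwoP4Free G := by
  rintro ⟨a₁, a₂, a₃, a₄, b₁, b₂, b₃, b₄, ha, hb, hab⟩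
  obtain ⟨s, hs, t, ht, hst⟩ := h {a₁, a₂, a₃, a₄} {b₁, b₂, b₃, b₄}
    (Set.disjoint_left.2 fun u hu hu' ↦ (hab u hu u hu').1 rfl)
    ⟨a₁, by simp, a₂, by simp, a₃, by simp, a₄, by simp, ha⟩
    ⟨b₁, by simp, b₂, by simp, b₃, by simp, b₄, by simp, hb⟩
  exact (hab s hs t ht).2 hst

end InducedP4

section Geodesics

variable {V : Type*} {G : SimpleGraph V} {u w : V}

theorem not_adj_getVert_of_length_eq_dist {p : G.Walk u w} (hp : p.length = G.dist u w) {i j : ℕ}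
    (hij : i + 1 < j) (hj : j ≤ p.length) : ¬ G.Adj (p.getVert i) (p.getVert j) := by
  intro hadj
  have hshort := dist_le ((p.take i).append (.cons hadj (p.drop j)))
  simp only [Walk.length_append, Walk.length_cons, Walk.take_length, Walk.drop_length] at hshort
  omega

theorem exists_isInducedP4_of_two_lt_dist (h : 2 < G.dist u w) :
    ∃ a b c d, IsInducedP4 G a b c d := by
  obtain ⟨p, hp⟩ := exists_walk_of_dist_ne_zero (by omega : G.dist u w ≠ 0)
  have adj_succ (i : ℕ) (hi : i < 3) : G.Adj (p.getVert i) (p.getVert (i + 1)) :=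
    p.adj_getVert_succ (by omega)
  have not_adj (i j : ℕ) (hij : i + 1 < j) (hj : j ≤ 3) :
      ¬ G.Adj (p.getVert i) (p.getVert j) :=
    not_adj_getVert_of_length_eq_dist hp hij (by omega)
  exact ⟨p.getVert 0, p.getVert 1, p.getVert 2, p.getVert 3, isInducedP4_iff.2
    ⟨adj_succ 0 (by simp), adj_succ 1 (by simp), adj_succ 2 (by simp),
      not_adj 0 2 (by simp) (by simp), not_adj 0 3 (by simp) (by simp),
      not_adj 1 3 (by simp) (by simp)⟩⟩

theorem preconnected_induce_insert {S : Set V} (hS : (G.induce S).Preconnected) (hw : w ∈ S)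
    (huw : G.Adj u w) : (G.induce (insert u S)).Preconnected := by
  rw [Set.insert_eq]
  exact (connected_induce_union .of_subsingleton hS (Set.mem_singleton u) hw huw).preconnected

theorem hasInducedP4On_insert_insert_of_preconnected {S : Set V} {p q : V}
    (hS : (G.induce S).Preconnected) (hp : ∃ s ∈ S, G.Adj s p) (hq : ∃ s ∈ S, G.Adj s q)
    (hpq : ¬ G.Adj p q) (hcommon : ∀ s ∈ S, ¬ (G.Adj s p ∧ G.Adj s q)) :
    HasInducedP4On G (insert p (insert q S)) := by
  obtain ⟨s, hsS, hsp⟩ := hp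
  obtain ⟨t, htS, htq⟩ := hq
  let H := G.induce (insert p (insert q S))
  let p' : ↥(insert p (insert q S)) := ⟨p, by simp⟩
  let q' : ↥(insert p (insert q S)) := ⟨q, by simp⟩
  have hreach : H.Reachable p' q' :=
    preconnected_induce_insert (preconnected_induce_insert hS htS htq.symm)
      (Set.mem_insert_of_mem q hsS) hsp.symm p' q'
  have hne : p' ≠ q' := by
    intro h
    obtain rfl : p = q := congrArg Subtype.val h
    exact hcommon s hsS ⟨hsp, hsp⟩
  have hcommon' : H.commonNeighbors p' q' = ∅ := by
    rw [Set.eq_empty_iff_forall_notMem]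
    rintro ⟨x, rfl | rfl | hxS⟩ ⟨hpx, hqx⟩
    · exact H.irrefl hpx
    · exact H.irrefl hqx
    · exact hcommon x hxS ⟨G.adj_symm hpx, G.adj_symm hqx⟩
  have hdist : 2 < H.dist p' q' := by
    have := two_lt_edist_iff.2 ⟨hne, hpq, hcommon'⟩
    rw [← hreach.coe_dist_eq_edist] at this
    exact_mod_cast this
  obtain ⟨a, b, c, d, h⟩ := exists_isInducedP4_of_two_lt_dist hdist
  exact ⟨a, a.2, b, b.2, c, c.2, d, d.2, isInducedP4_comap.1 h⟩

end Geodesics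

section Collapse

variable {V : Type*} {G : SimpleGraph V} {X Y : Set V} {v : V}
  {S T : Set ({a : V // a ∉ X ∪ Y} ⊕ Bool)} {s t : {a : V // a ∉ X ∪ Y} ⊕ Bool}

/-- The vertices of `G` that are identified to a given vertex of `collapse G X Y`, for lifting
adjacencies of the collapse to edges of `G`; `false` stands for the class `X`, `true` for `Y`. -/
def collapseFiber (X Y : Set V) : {a : V // a ∉ X ∪ Y} ⊕ Bool → Set V
  | Sum.inl a => {a.1}
  | Sum.inr i => if i then Y else X

theorem collapseFiber_inr_union {i j : Bool} (hij : i ≠ j) :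
    collapseFiber X Y (Sum.inr i) ∪ collapseFiber X Y (Sum.inr j) = X ∪ Y := by
  cases i <;> cases j <;> simp_all [collapseFiber, Set.union_comm]

theorem collapse_adj_inl_right {a : {a : V // a ∉ X ∪ Y}} :
    (collapse G X Y).Adj s (Sum.inl a) ↔ ∃ u ∈ collapseFiber X Y s, G.Adj u a := by
  rcases s with s | _ | _ <;> simp [collapse, collapseAdj, collapseFiber]

theorem collapse_adj_inr_inr {i j : Bool} :
    (collapse G X Y).Adj (Sum.inr i) (Sum.inr j) ↔ i ≠ j :=
  Iff.rfl

theorem comap_inl_collapse :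
    (collapse G X Y).comap Sum.inl = G.comap (Subtype.val : {a : V // a ∉ X ∪ Y} → V) :=
  rfl

theorem not_adj_of_union_eq_neighborSet (hpart : X ∪ Y = G.neighborSet v)
    (a : {a : V // a ∉ X ∪ Y}) : ¬ G.Adj v a := by
  rw [← mem_neighborSet, ← hpart]
  exact a.2

theorem collapseFiber_inr_subset_neighborSet (hpart : X ∪ Y = G.neighborSet v) (i : Bool) :
    collapseFiber X Y (Sum.inr i) ⊆ G.neighborSet v :=
  Set.subset_union_left.trans
    ((collapseFiber_inr_union (Bool.not_ne_self i).symm).trans hpart).subset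

/-- The vertices of `G` available to lift a path of `collapse G X Y` with vertices in `S`: the
fibres over `S`, together with the vertex `v` whose neighbourhood is collapsed. -/
def collapseLift (X Y : Set V) (v : V) (S : Set ({a : V // a ∉ X ∪ Y} ⊕ Bool)) : Set V :=
  insert v (⋃ s ∈ S, collapseFiber X Y s)

theorem collapseFiber_subset_collapseLift (hs : s ∈ S) :
    collapseFiber X Y s ⊆ collapseLift X Y v S :=
  (Set.subset_biUnion_of_mem hs).trans (Set.subset_insert _ _)

theorem hasInducedP4On_collapseLift_of_inl_inl (hpart : X ∪ Y = G.neighborSet v)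
    {a b : {a : V // a ∉ X ∪ Y} ⊕ Bool} {c d : {a : V // a ∉ X ∪ Y}} (ha : a ∈ S) (hb : b ∈ S)
    (hc : Sum.inl c ∈ S) (hd : Sum.inl d ∈ S)
    (h : IsInducedP4 (collapse G X Y) a b (Sum.inl c) (Sum.inl d)) :
    HasInducedP4On G (collapseLift X Y v S) := by
  obtain ⟨hab, hbc, hcd, hac, had, hbd⟩ := isInducedP4_iff.1 h
  simp only [collapse_adj_inl_right, not_exists, not_and] at hbc hac had hbd
  have hc' : c.1 ∈ collapseLift X Y v S := collapseFiber_subset_collapseLift hc rfl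
  have hd' : d.1 ∈ collapseLift X Y v S := collapseFiber_subset_collapseLift hd rfl
  rcases b with b | i
  · obtain ⟨u, hu, hub⟩ := collapse_adj_inl_right.1 hab
    exact ⟨u, collapseFiber_subset_collapseLift ha hu, b, collapseFiber_subset_collapseLift hb rfl,
      c, hc', d, hd', isInducedP4_iff.2
        ⟨hub, by simpa [collapseFiber] using hbc, hcd, hac u hu, had u hu, hbd b rfl⟩⟩
  · obtain ⟨u, hu, huc⟩ := hbc
    exact ⟨v, Set.mem_insert _ _, u, collapseFiber_subset_collapseLift hb hu, c, hc', d, hd',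
      isInducedP4_iff.2 ⟨collapseFiber_inr_subset_neighborSet hpart i hu, huc, hcd,
        not_adj_of_union_eq_neighborSet hpart c, not_adj_of_union_eq_neighborSet hpart d,
        hbd u hu⟩⟩

theorem hasInducedP4On_collapseLift_of_inr_inr (hpart : X ∪ Y = G.neighborSet v)
    (hconn : (G.induce (G.neighborSet v)).Preconnected) {i j : Bool} {p q : {a : V // a ∉ X ∪ Y}}
    (hp : Sum.inl p ∈ S) (hi : Sum.inr i ∈ S) (hj : Sum.inr j ∈ S) (hq : Sum.inl q ∈ S)
    (h : IsInducedP4 (collapse G X Y) (Sum.inl p) (Sum.inr i) (Sum.inr j) (Sum.inl q)) :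
    HasInducedP4On G (collapseLift X Y v S) := by
  obtain ⟨hpi, hij, hjq, hpj, hpq, hiq⟩ := isInducedP4_iff.1 h
  rw [adj_comm, collapse_adj_inl_right] at hpi hpj
  rw [collapse_adj_inl_right] at hjq hiq
  have hcover : G.neighborSet v = collapseFiber X Y (Sum.inr i) ∪ collapseFiber X Y (Sum.inr j) :=
    hpart ▸ (collapseFiber_inr_union (collapse_adj_inr_inr.1 hij)).symm
  obtain ⟨s, hs, hsp⟩ := hpi
  obtain ⟨t, ht, htq⟩ := hjq
  have hpath : HasInducedP4On G (insert p.1 (insert q.1 (G.neighborSet v))) := by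
    refine hasInducedP4On_insert_insert_of_preconnected hconn
      ⟨s, collapseFiber_inr_subset_neighborSet hpart i hs, hsp⟩
      ⟨t, collapseFiber_inr_subset_neighborSet hpart j ht, htq⟩ hpq ?_
    rintro u hu ⟨hup, huq⟩
    rcases hcover ▸ hu with hui | huj
    · exact hiq ⟨u, hui, huq⟩
    · exact hpj ⟨u, huj, hup⟩
  refine hpath.mono (Set.insert_subset (collapseFiber_subset_collapseLift hp rfl)
    (Set.insert_subset (collapseFiber_subset_collapseLift hq rfl) ?_))
  rw [hcover]
  exact Set.union_subset (collapseFiber_subset_collapseLift hi)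
    (collapseFiber_subset_collapseLift hj)

theorem exists_eq_inl_or_of_not_collapse_adj (hne : s ≠ t) (hadj : ¬ (collapse G X Y).Adj s t) :
    (∃ a, s = Sum.inl a) ∨ ∃ a, t = Sum.inl a := by
  rcases s with a | i
  · exact .inl ⟨a, rfl⟩
  rcases t with a | j
  · exact .inr ⟨a, rfl⟩
  exact absurd (collapse_adj_inr_inr.2 fun hij ↦ hne (congrArg Sum.inr hij)) hadj

theorem hasInducedP4On_collapseLift (hpart : X ∪ Y = G.neighborSet v)
    (hconn : (G.induce (G.neighborSet v)).Preconnected)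
    (hS : HasInducedP4On (collapse G X Y) S) : HasInducedP4On G (collapseLift X Y v S) := by
  obtain ⟨a, ha, b, hb, c, hc, d, hd, h⟩ := hS
  have ⟨_, hac, had, _, hbd, _, _, _, _, hac', had', hbd'⟩ := h
  rcases a with p | i
  · rcases d with q | j
    · rcases b with b | i
      · exact hasInducedP4On_collapseLift_of_inl_inl hpart hd hc hb ha h.symm
      rcases c with c | j
      · exact hasInducedP4On_collapseLift_of_inl_inl hpart ha hb hc hd h
      · exact hasInducedP4On_collapseLift_of_inr_inr hpart hconn ha hb hc hd h
    · obtain ⟨b, rfl⟩ := (exists_eq_inl_or_of_not_collapse_adj hbd hbd').resolve_right (by simp)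
      exact hasInducedP4On_collapseLift_of_inl_inl hpart hd hc hb ha h.symm
  · obtain ⟨c, rfl⟩ := (exists_eq_inl_or_of_not_collapse_adj hac hac').resolve_left (by simp)
    obtain ⟨d, rfl⟩ := (exists_eq_inl_or_of_not_collapse_adj had had').resolve_left (by simp)
    exact hasInducedP4On_collapseLift_of_inl_inl hpart ha hb hc hd h

theorem subset_range_inl_or_of_forall_not_collapse_adj (hdisj : Disjoint S T)
    (hST : ∀ s ∈ S, ∀ t ∈ T, ¬ (collapse G X Y).Adj s t) :
    S ⊆ Set.range Sum.inl ∨ T ⊆ Set.range Sum.inl := by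
  by_contra! h
  obtain ⟨⟨s, hs, hs'⟩, ⟨t, ht, ht'⟩⟩ := h.imp Set.not_subset.1 Set.not_subset.1
  rcases exists_eq_inl_or_of_not_collapse_adj (hdisj.ne_of_mem hs ht) (hST s hs t ht) with
    ⟨a, rfl⟩ | ⟨a, rfl⟩
  · exact hs' ⟨a, rfl⟩
  · exact ht' ⟨a, rfl⟩

theorem TwoP4Free.exists_collapse_adj_of_subset_range_inl (hG : TwoP4Free G)
    (hpart : X ∪ Y = G.neighborSet v) (hconn : (G.induce (G.neighborSet v)).Preconnected)
    (hS : HasInducedP4On (collapse G X Y) S)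
    (hT : HasInducedP4On (collapse G X Y) T) (hTold : T ⊆ Set.range Sum.inl) :
    ∃ s ∈ S, ∃ t ∈ T, (collapse G X Y).Adj s t := by
  obtain ⟨T, rfl⟩ := Set.subset_range_iff_exists_image_eq.1 hTold
  rw [← hasInducedP4On_comap, comap_inl_collapse, hasInducedP4On_comap] at hT
  obtain ⟨u, hu, -, ⟨t, ht, rfl⟩, hut⟩ :=
    hG.exists_adj_s4 (hasInducedP4On_collapseLift hpart hconn hS) hT
  rcases hu with rfl | hu
  · exact absurd hut (not_adj_of_union_eq_neighborSet hpart t)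
  · obtain ⟨s, hs, hus⟩ := Set.mem_iUnion₂.1 hu
    exact ⟨s, hs, Sum.inl t, ⟨t, ht, rfl⟩, collapse_adj_inl_right.2 ⟨u, hus, hut⟩⟩

end Collapse

theorem stmt4_general {V : Type*} (G : SimpleGraph V) (h2P4 : TwoP4Free G) (v : V) (X Y : Set V)
    (hpart : X ∪ Y = G.neighborSet v) (hconn : (G.induce (G.neighborSet v)).Preconnected) :
    TwoP4Free (collapse G X Y) := by
  refine twoP4Free_of_forall_exists_adj fun S T hdisj hS hT ↦ ?_
  by_contra! hST
  rcases subset_range_inl_or_of_forall_not_collapse_adj hdisj hST with hSold | hTold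
  · obtain ⟨t, ht, s, hs, hts⟩ :=
      h2P4.exists_collapse_adj_of_subset_range_inl hpart hconn hT hS hSold
    exact hST s hs t ht hts.symm
  · obtain ⟨s, hs, t, ht, hst⟩ :=
      h2P4.exists_collapse_adj_of_subset_range_inl hpart hconn hS hT hTold
    exact hST s hs t ht hst

theorem stmt4 {V : Type*} [Fintype V] (G : SimpleGraph V) (h2P4 : TwoP4Free G)
    (v : V) (X Y : Set V)
    (hpart : X ∪ Y = G.neighborSet v) (hdisj : Disjoint X Y)
    (hXne : X.Nonempty) (hYne : Y.Nonempty)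
    (hbip : ∀ a b, G.Adj v a → G.Adj v b → G.Adj a b →
      (a ∈ X ∧ b ∈ Y) ∨ (a ∈ Y ∧ b ∈ X))
    (hconn : (G.induce (G.neighborSet v)).Connected) :
    TwoP4Free (collapse G X Y) :=
  stmt4_general G h2P4 v X Y hpart hconn.preconnected
end

section
/- Let G be a finite simple graph that is 2P4-free, let v1,…,v7 induce a C7 in G with vertex set N0, and let N2 be the set of vertices outside N0 with no neighbor in N0. Let R be a set of vertices, each satisfying N0(x) = {v1, v3}, such that R is an independent set of G. For a vertex x, let C2(x) denote the set of connected components of the subgraph induced by N2 that contain at least one neighbor of x. Then for any two vertices x, y ∈ R, either C2(x) = C2(y) or C2(x) and C2(y) are disjoint. -/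
/-- `C` is a connected component of the subgraph of `G` induced by `S`. -/
def IsCompOf {V : Type*} (G : SimpleGraph V) (S C : Set V) : Prop :=
  C.Nonempty ∧ C ⊆ S ∧ (G.induce C).Connected ∧
  ∀ u ∈ C, ∀ w ∈ S, G.Adj u w → w ∈ C

section

variable {V : Type*} {G : SimpleGraph V}

/-- The components of the subgraph induced by `S` that contain a neighbour of `x`; for `S = N2`
this is the paper's `C2(x)`. -/
def attachedComps (G : SimpleGraph V) (S : Set V) (x : V) : Set (Set V) :=
  {C | IsCompOf G S C ∧ ∃ u ∈ C, G.Adj x u}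

/-- The subgraph of `G` induced by `A` is `P₄`-free. -/
def IsP4FreeOn (G : SimpleGraph V) (A : Set V) : Prop :=
  ∀ ⦃a⦄, a ∈ A → ∀ ⦃b⦄, b ∈ A → ∀ ⦃c⦄, c ∈ A → ∀ ⦃d⦄, d ∈ A → ¬ IsInducedP4 G a b c d

theorem IsInducedCycle.isInducedP4 {n : ℕ} {v : ZMod n → V} (hv : IsInducedCycle G n v)
    (hn : 5 ≤ n) (i : ZMod n) : IsInducedP4 G (v i) (v (i + 1)) (v (i + 2)) (v (i + 3)) := by
  have natCast_ne_zero (k : ℕ) (hk : 0 < k) (hk5 : k < 5) : (k : ZMod n) ≠ 0 := by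
    rw [Ne, ZMod.natCast_eq_zero_iff]
    exact Nat.not_dvd_of_pos_of_lt hk (by lia)
  have h1 : (1 : ZMod n) ≠ 0 := mod_cast natCast_ne_zero 1 (by decide) (by decide)
  have h2 : (2 : ZMod n) ≠ 0 := mod_cast natCast_ne_zero 2 (by decide) (by decide)
  have h3 : (3 : ZMod n) ≠ 0 := mod_cast natCast_ne_zero 3 (by decide) (by decide)
  have h4 : (4 : ZMod n) ≠ 0 := mod_cast natCast_ne_zero 4 (by decide) (by decide)
  apply isInducedP4_of_adj <;> rw [hv.2]
  · exact .inl rfl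
  · exact .inl (by ring)
  · exact .inl (by ring)
  · rintro (h | h)
    · exact h1 (by linear_combination h)
    · exact h3 (by linear_combination -h)
  · rintro (h | h)
    · exact h2 (by linear_combination h)
    · exact h4 (by linear_combination -h)
  · rintro (h | h)
    · exact h1 (by linear_combination h)
    · exact h3 (by linear_combination -h)

theorem TwoP4Free.isP4FreeOn (hG : TwoP4Free G) {A : Set V} {q₁ q₂ q₃ q₄ : V}
    (hQ : IsInducedP4 G q₁ q₂ q₃ q₄)
    (hA : ∀ u ∈ A, ∀ w ∈ ({q₁, q₂, q₃, q₄} : Set V), ¬ G.Adj u w) : IsP4FreeOn G A := by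
  intro a ha b hb c hc d hd hP
  refine hG ⟨a, b, c, d, q₁, q₂, q₃, q₄, hP, hQ, fun u hu w hw => ?_⟩
  have huA : u ∈ A := by
    rcases hu with rfl | rfl | rfl | rfl <;> assumption
  refine ⟨?_, hA u huA w hw⟩
  rintro rfl
  -- A vertex of the path `q₁ q₂ q₃ q₄` has a neighbour on it, which no vertex of `A` has.
  obtain ⟨-, -, -, -, -, -, h12, h23, h34, -⟩ := hQ
  rcases hw with rfl | rfl | rfl | rfl
  · exact hA _ huA q₂ (by simp) h12
  · exact hA _ huA q₃ (by simp) h23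
  · exact hA _ huA q₄ (by simp) h34
  · exact hA _ huA q₃ (by simp) h34.symm

theorem exists_adj_mem_notMem_of_preconnected_induce {C T : Set V}
    (hC : (G.induce C).Preconnected) {a b : V} (ha : a ∈ C) (hb : b ∈ C) (haT : a ∈ T)
    (hbT : b ∉ T) : ∃ p ∈ C, ∃ q ∈ C, p ∈ T ∧ q ∉ T ∧ G.Adj p q := by
  obtain ⟨w⟩ := hC ⟨a, ha⟩ ⟨b, hb⟩
  obtain ⟨e, -, hfst, hsnd⟩ := w.exists_boundary_dart (Subtype.val ⁻¹' T) haT hbT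
  exact ⟨e.fst, e.fst.2, e.snd, e.snd.2, hfst, hsnd, e.adj⟩

namespace IsCompOf

variable {S C D : Set V}

theorem subset_of_mem (hC : IsCompOf G S C) (hD : IsCompOf G S D) {u : V} (huC : u ∈ C)
    (huD : u ∈ D) : C ⊆ D := by
  intro w hwC
  by_contra hwD
  obtain ⟨p, -, q, hqC, hpD, hqD, hpq⟩ :=
    exists_adj_mem_notMem_of_preconnected_induce hC.2.2.1.preconnected huC hwC huD hwD
  exact hqD (hD.2.2.2 p hpD q (hC.2.1 hqC) hpq)

theorem not_adj_of_ne (hC : IsCompOf G S C) (hD : IsCompOf G S D) (hCD : C ≠ D) {u w : V}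
    (hu : u ∈ C) (hw : w ∈ D) : ¬ G.Adj u w := by
  intro huw
  have hwC : w ∈ C := hC.2.2.2 u hu w (hD.2.1 hw) huw
  exact hCD ((hC.subset_of_mem hD hwC hw).antisymm (hD.subset_of_mem hC hw hwC))

end IsCompOf

section

variable {S : Set V} {x y : V}

theorem attachedComps_subset_of_mem (hxy : ¬ G.Adj x y)
    (hP4 : IsP4FreeOn G (insert x (insert y S))) {C : Set V} (hCx : C ∈ attachedComps G S x)
    (hCy : C ∈ attachedComps G S y) : attachedComps G S x ⊆ attachedComps G S y := by
  rintro D ⟨hD, d, hd, hxd⟩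
  refine ⟨hD, ?_⟩
  by_contra! hyD
  obtain ⟨hC, c, hc, hxc⟩ := hCx
  obtain ⟨-, e, he, hye⟩ := hCy
  have hDC : D ≠ C := fun h => hyD e (h ▸ he) hye
  have hS {u : V} (hu : u ∈ S) : u ∈ insert x (insert y S) := .inr (.inr hu)
  by_cases hxe : G.Adj x e
  · exact hP4 (hS (hD.2.1 hd)) (.inl rfl) (hS (hC.2.1 he)) (.inr (.inl rfl)) <|
      isInducedP4_of_adj hxd.symm hxe hye.symm (hD.not_adj_of_ne hC hDC hd he)
        (fun h => hyD d hd h.symm) hxy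
  · obtain ⟨p, hp, q, hq, hxp, hxq, hpq⟩ := exists_adj_mem_notMem_of_preconnected_induce
      (T := G.neighborSet x) hC.2.2.1.preconnected hc he hxc hxe
    exact hP4 (hS (hD.2.1 hd)) (.inl rfl) (hS (hC.2.1 hp)) (hS (hC.2.1 hq)) <|
      isInducedP4_of_adj hxd.symm hxp hpq (hD.not_adj_of_ne hC hDC hd hp)
        (hD.not_adj_of_ne hC hDC hd hq) hxq

theorem attachedComps_eq_or_disjoint (hxy : ¬ G.Adj x y)
    (hP4 : IsP4FreeOn G (insert x (insert y S))) :
    attachedComps G S x = attachedComps G S y ∨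
      Disjoint (attachedComps G S x) (attachedComps G S y) := by
  refine or_iff_not_imp_right.mpr fun h => ?_
  obtain ⟨C, hCx, hCy⟩ := Set.not_disjoint_iff.mp h
  exact (attachedComps_subset_of_mem hxy hP4 hCx hCy).antisymm <|
    attachedComps_subset_of_mem (fun h => hxy h.symm) (Set.insert_comm x y S ▸ hP4) hCy hCx

theorem stmt7_general (hG : TwoP4Free G) {v : ZMod 7 → V} (hv : IsInducedCycle G 7 v)
    (hS : ∀ u ∈ S, ∀ i, ¬ G.Adj u (v i)) (hxy : ¬ G.Adj x y)
    (hx : ∀ i, G.Adj x (v i) → i = 1 ∨ i = 2 ∨ i = 3)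
    (hy : ∀ i, G.Adj y (v i) → i = 1 ∨ i = 2 ∨ i = 3) :
    attachedComps G S x = attachedComps G S y ∨
      Disjoint (attachedComps G S x) (attachedComps G S y) := by
  refine attachedComps_eq_or_disjoint hxy (hG.isP4FreeOn (hv.isInducedP4 (by decide) 4) ?_)
  rintro u (rfl | rfl | hu) w hw huw
  · rcases hw with rfl | rfl | rfl | rfl <;> exact absurd (hx _ huw) (by decide)
  · rcases hw with rfl | rfl | rfl | rfl <;> exact absurd (hy _ huw) (by decide)
  · rcases hw with rfl | rfl | rfl | rfl <;> exact hS u hu _ huw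

end

end

theorem stmt7 {V : Type*} [Fintype V] (G : SimpleGraph V) (h2P4 : TwoP4Free G)
    (v : ZMod 7 → V) (hv : IsInducedCycle G 7 v)
    (N2 : Set V) (hN2 : N2 = {u | u ∉ Set.range v ∧ ∀ i, ¬ G.Adj u (v i)})
    (R : Set V)
    (hR : ∀ x ∈ R, x ∉ Set.range v ∧
      {u | u ∈ Set.range v ∧ G.Adj x u} = {v 1, v 3})
    (hind : ∀ a ∈ R, ∀ b ∈ R, ¬ G.Adj a b)
    (C2 : V → Set (Set V))
    (hC2 : ∀ x : V, C2 x = {C | IsCompOf G N2 C ∧ ∃ u ∈ C, G.Adj x u})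
    (x y : V) (hx : x ∈ R) (hy : y ∈ R) :
    C2 x = C2 y ∨ Disjoint (C2 x) (C2 y) := by
  have hN (z : V) (hz : z ∈ R) (i : ZMod 7) (hzi : G.Adj z (v i)) : i = 1 ∨ i = 2 ∨ i = 3 :=
    ((hR z hz).2.subset ⟨⟨i, rfl⟩, hzi⟩).imp (@hv.1 _ _) fun h => .inr (hv.1 h)
  rw [hC2, hC2]
  exact stmt7_general h2P4 hv (fun _ hu => (hN2.subset hu).2) (hind x hx y hy) (hN x hx) (hN y hy)
end

section
/- Let G be a finite simple graph, let N2 be a set of vertices, and let C be a connected component of the subgraph induced by N2. Let x be a vertex outside N2 such that all neighbors of x in N2 lie in C and x has at least one neighbor in C. Let y be a vertex distinct from and non-adjacent to x such that either y ∈ C, or y is outside N2 and has at least one neighbor in N2, all of whose N2-neighbors lie in C. Assume the subgraph of G induced by C∪{x,y} contains no induced path on 4 vertices. Then y is adjacent to at least one vertex of N(x)∩C; moreover, if the subgraph induced by N(x)∩C is disconnected, then y is adjacent to every vertex of N(x)∩C. -/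
/-!
In a `P₄`-free graph, two distinct non-adjacent vertices `x` and `y` joined by a walk have a common
neighbor: by induction, if `w` follows `x` on the walk and `z` is a common neighbor of `w` and `y`,
then `x, w, z, y` is not an induced `P₄`, so `w` or `z` is a common neighbor of `x` and `y`.
Moreover, every common neighbor `u` of `x` and `y` is adjacent to every neighbor `v` of `x` that is
not a neighbor of `y`, as otherwise `y, u, x, v` would be an induced `P₄`. Hence, if `N(x) ∩ C`
contains both neighbors and non-neighbors of `y`, all edges between these two parts are present and
`N(x) ∩ C` induces a connected graph.
-/

/-- A graph is `P₄`-free (a cograph) if it has no induced path on four vertices. -/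
def IsP4Free {V : Type*} (G : SimpleGraph V) : Prop :=
  ∀ a b c d : V, ¬ IsInducedP4 G a b c d

section

variable {V : Type*} {G : SimpleGraph V}

theorem isP4Free_induce {S : Set V}
    (h : ∀ a b c d : V, a ∈ S → b ∈ S → c ∈ S → d ∈ S → ¬ IsInducedP4 G a b c d) :
    IsP4Free (G.induce S) := by
  rintro ⟨a, ha⟩ ⟨b, hb⟩ ⟨c, hc⟩ ⟨d, hd⟩ ⟨-, -, -, -, -, -, hab, hbc, hcd, hac, had, hbd⟩
  exact h a b c d ha hb hc hd (isInducedP4_of_adj hab hbc hcd hac had hbd)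

theorem IsP4Free.eq_or_adj_or_commonNeighbors_nonempty (hG : IsP4Free G) {x y : V}
    (p : G.Walk x y) : x = y ∨ G.Adj x y ∨ (G.commonNeighbors x y).Nonempty := by
  induction p with
  | nil => exact Or.inl rfl
  | @cons x w y hxw _ ih =>
    obtain rfl | hwy | ⟨z, hwz, hyz⟩ := ih
    · exact Or.inr (Or.inl hxw)
    · exact Or.inr (Or.inr ⟨w, hxw, hwy.symm⟩)
    · by_contra! ⟨_, hxy, hcommon⟩
      have hxz : ¬ G.Adj x z := fun hxz => Set.notMem_empty z (hcommon ▸ ⟨hxz, hyz⟩)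
      have hwy : ¬ G.Adj w y := fun hwy => Set.notMem_empty w (hcommon ▸ ⟨hxw, hwy.symm⟩)
      exact hG x w z y (isInducedP4_of_adj hxw hwz hyz.symm hxz hxy hwy)

theorem IsP4Free.adj_of_mem_commonNeighbors (hG : IsP4Free G) {x y u v : V} (hxy : ¬ G.Adj x y)
    (hu : u ∈ G.commonNeighbors x y) (hxv : G.Adj x v) (hyv : ¬ G.Adj y v) : G.Adj u v := by
  by_contra huv
  exact hG y u x v (isInducedP4_of_adj hu.2 hu.1.symm hxv (fun h => hxy h.symm) hyv huv)

theorem connected_of_forall_adj_compl {s : Set V} (hs : s.Nonempty) (hs' : sᶜ.Nonempty)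
    (hadj : ∀ u ∈ s, ∀ v ∈ sᶜ, G.Adj u v) : G.Connected := by
  obtain ⟨u, hu⟩ := hs
  obtain ⟨v, hv⟩ := hs'
  refine G.connected_iff_exists_forall_reachable.mpr ⟨u, fun w => ?_⟩
  by_cases hw : w ∈ s
  · exact (hadj u hu v hv).reachable.trans (hadj w hw v hv).reachable.symm
  · exact (hadj u hu w hw).reachable

theorem connected_induce_union_singleton {C : Set V} {x : V} (hC : (G.induce C).Preconnected)
    (hx : x ∈ C ∨ ∃ u ∈ C, G.Adj x u) : (G.induce (C ∪ {x})).Connected := by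
  have hsingleton : (G.induce {x}).Preconnected := .of_subsingleton
  obtain hxC | ⟨u, huC, hxu⟩ := hx
  · exact G.induce_union_connected hC hsingleton ⟨x, hxC, rfl⟩
  · exact G.connected_induce_union hC hsingleton huC rfl hxu.symm

theorem exists_mem_neighborSet_inter_adj {C : Set V} {x y : V}
    (hconn : (G.induce (C ∪ {x, y})).Preconnected) (hP4 : IsP4Free (G.induce (C ∪ {x, y})))
    (hyx : y ≠ x) (hxy : ¬ G.Adj x y) : ∃ u ∈ G.neighborSet x ∩ C, G.Adj y u := by
  obtain ⟨p⟩ := hconn ⟨x, by simp⟩ ⟨y, by simp⟩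
  obtain h | h | ⟨⟨u, huC | rfl | rfl⟩, hxu, hyu⟩ := hP4.eq_or_adj_or_commonNeighbors_nonempty p
  · exact absurd (congrArg Subtype.val h).symm hyx
  · exact absurd h hxy
  · exact ⟨u, ⟨hxu, huC⟩, hyu⟩
  · exact absurd hxu G.irrefl
  · exact absurd hyu G.irrefl

theorem connected_induce_neighborSet_inter {C : Set V} {x y : V}
    (hP4 : IsP4Free (G.induce (C ∪ {x, y}))) (hxy : ¬ G.Adj x y)
    (hadj : ∃ u ∈ G.neighborSet x ∩ C, G.Adj y u)
    (hnadj : ∃ v ∈ G.neighborSet x ∩ C, ¬ G.Adj y v) :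
    (G.induce (G.neighborSet x ∩ C)).Connected := by
  obtain ⟨u, hu, hyu⟩ := hadj
  obtain ⟨v, hv, hyv⟩ := hnadj
  refine connected_of_forall_adj_compl (s := {w | G.Adj y w}) ⟨⟨u, hu⟩, hyu⟩ ⟨⟨v, hv⟩, hyv⟩ ?_
  rintro ⟨a, hxa, haC⟩ hya ⟨b, hxb, hbC⟩ hyb
  exact hP4.adj_of_mem_commonNeighbors (x := ⟨x, by simp⟩) (y := ⟨y, by simp⟩)
    (u := ⟨a, Or.inl haC⟩) (v := ⟨b, Or.inl hbC⟩) hxy ⟨hxa, hya⟩ hxb hyb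

theorem stmt8_general {C : Set V} {x y : V} (hC : (G.induce C).Preconnected)
    (hx : x ∈ C ∨ ∃ u ∈ C, G.Adj x u) (hy : y ∈ C ∨ ∃ u ∈ C, G.Adj y u)
    (hyx : y ≠ x) (hxy : ¬ G.Adj x y) (hP4 : IsP4Free (G.induce (C ∪ {x, y}))) :
    (∃ u ∈ G.neighborSet x ∩ C, G.Adj y u) ∧
      (¬ (G.induce (G.neighborSet x ∩ C)).Connected →
        ∀ u ∈ G.neighborSet x ∩ C, G.Adj y u) := by
  have hconn : (G.induce (C ∪ {x, y})).Connected := by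
    rw [← Set.singleton_union, ← Set.union_assoc]
    exact connected_induce_union_singleton (connected_induce_union_singleton hC hx).preconnected
      (hy.imp Or.inl fun ⟨u, huC, hyu⟩ => ⟨u, Or.inl huC, hyu⟩)
  have hcommon := exists_mem_neighborSet_inter_adj hconn.preconnected hP4 hyx hxy
  refine ⟨hcommon, fun hdisconn v hv => ?_⟩
  by_contra hyv
  exact hdisconn (connected_induce_neighborSet_inter hP4 hxy hcommon ⟨v, hv, hyv⟩)

end

theorem stmt8 {V : Type*} [Fintype V] (G : SimpleGraph V)
    (N2 C : Set V) (hC : IsCompOf G N2 C)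
    (x : V) (hxN2 : x ∉ N2)
    (hxall : ∀ u ∈ N2, G.Adj x u → u ∈ C) (hxC : ∃ u ∈ C, G.Adj x u)
    (y : V) (hyx : y ≠ x) (hyadj : ¬ G.Adj x y)
    (hy : y ∈ C ∨
      (y ∉ N2 ∧ (∃ u ∈ N2, G.Adj y u) ∧ ∀ u ∈ N2, G.Adj y u → u ∈ C))
    -- the subgraph induced by `C ∪ {x, y}` contains no induced `P₄`
    (hP4 : ∀ a b c d : V, a ∈ C ∪ {x, y} → b ∈ C ∪ {x, y} → c ∈ C ∪ {x, y} →
      d ∈ C ∪ {x, y} → ¬ IsInducedP4 G a b c d) :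
    (∃ u ∈ G.neighborSet x ∩ C, G.Adj y u) ∧
      (¬ (G.induce (G.neighborSet x ∩ C)).Connected →
        ∀ u ∈ G.neighborSet x ∩ C, G.Adj y u) :=
  stmt8_general hC.2.2.1.preconnected (Or.inr hxC)
    (hy.imp_right fun ⟨_, ⟨u, hu, hyu⟩, hyC⟩ => ⟨u, hyC u hu hyu, hyu⟩) hyx hyadj
    (isP4Free_induce hP4)
end
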